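/- arXiv:2002.08621 — 3 statements merged into one kernel-verified Lean document; each statement's English description precedes it below -/
import Mathlib

section
/- Let p, q ∈ ℝᵏ be strictly positive probability vectors on a finite set X of k points. Define on X×X the mixtures M⁺(x,y) = (p(x)p(y)+q(x)q(y))/2, M⁻(x,y) = (p(x)q(y)+q(x)p(y))/2, M(x,y) = (M⁺(x,y)+M⁻(x,y))/2, and F(x,y) = p(x)p(y)+q(x)q(y)−p(x)q(y)−q(x)p(y). Let D*(x,y) = M⁺(x,y)/(2·M(x,y)). Then Σ_{x,y} F(x,y)·log D*(x,y) = 4·( KL(M⁺‖M) + KL(M‖M⁺) ), where for probability vectors f, g on X×X with g strictly positive, KL(f‖g) = Σ_{x,y} f(x,y)·log(f(x,y)/g(x,y)). -/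
open scoped BigOperators

/-!
The weight factors as `F(x, y) = (p x - q x) (p y - q y)`, so its total is `(∑ p - ∑ q)² = 0` and
the constant `2` in `D* = M⁺ / (2 M)` drops out of `∑ F log D*`. Since also `F = 4 (M⁺ - M)`, what
remains is `4 ∑ (M⁺ - M) log (M⁺ / M)`, four times the symmetrized Kullback–Leibler divergence.
-/

section KullbackLeibler

variable {α : Type*} [Fintype α]

/-- The Kullback–Leibler divergence of two weight functions on a finite type, as a real-valued sum.
It has this meaning where `g` does not vanish; a point with `g a = 0` contributes `0`, not `∞`. -/
noncomputable def finiteKL (f g : α → ℝ) : ℝ :=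
  ∑ a, f a * Real.log (f a / g a)

theorem finiteKL_add_finiteKL_swap (f g : α → ℝ) :
    finiteKL f g + finiteKL g f = ∑ a, (f a - g a) * Real.log (f a / g a) := by
  rw [finiteKL, finiteKL, ← Finset.sum_add_distrib]
  refine Finset.sum_congr rfl fun a _ => ?_
  rw [← inv_div (f a) (g a), Real.log_inv]
  ring

theorem sum_mul_log_div_const {w r : α → ℝ} {c : ℝ} (hw : ∑ a, w a = 0) (hr : ∀ a, r a ≠ 0)
    (hc : c ≠ 0) : ∑ a, w a * Real.log (r a / c) = ∑ a, w a * Real.log (r a) := by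
  simp only [Real.log_div (hr _) hc, mul_sub, Finset.sum_sub_distrib, ← Finset.sum_mul, hw,
    zero_mul, sub_zero]

end KullbackLeibler

section PairMixtures

variable {ι : Type*}

/-- The same-pair mixture `M⁺`: the law of two points drawn independently from one of `p` and `q`,
chosen by a fair coin. -/
noncomputable def samePairMixture (p q : ι → ℝ) (z : ι × ι) : ℝ :=
  (p z.1 * p z.2 + q z.1 * q z.2) / 2

/-- The different-pair mixture `M⁻`: the law of two points drawn independently, one from `p` and
one from `q`, in an order chosen by a fair coin. -/
noncomputable def diffPairMixture (p q : ι → ℝ) (z : ι × ι) : ℝ :=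
  (p z.1 * q z.2 + q z.1 * p z.2) / 2

/-- The balanced mixture `M` of the same-pair and different-pair mixtures. -/
noncomputable def pairMixture (p q : ι → ℝ) (z : ι × ι) : ℝ :=
  (samePairMixture p q z + diffPairMixture p q z) / 2

/-- The weight `F = 2 (M⁺ - M⁻)` of the PairGAN generator loss, written without the mixtures. -/
def generatorWeight (p q : ι → ℝ) (z : ι × ι) : ℝ :=
  p z.1 * p z.2 + q z.1 * q z.2 - p z.1 * q z.2 - q z.1 * p z.2

/-- The discriminator `D* = M⁺ / (2 M) = M⁺ / (M⁺ + M⁻)`, which minimizes the PairGAN discriminator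
loss for `f₁ t = -log t` and `f₂ t = -log (1 - t)`. -/
noncomputable def optimalDiscriminator (p q : ι → ℝ) (z : ι × ι) : ℝ :=
  samePairMixture p q z / (2 * pairMixture p q z)

theorem samePairMixture_pos {p q : ι → ℝ} (hp : ∀ x, 0 ≤ p x) (hq : ∀ x, 0 < q x) (z : ι × ι) :
    0 < samePairMixture p q z :=
  half_pos (add_pos_of_nonneg_of_pos (mul_nonneg (hp z.1) (hp z.2)) (mul_pos (hq z.1) (hq z.2)))

theorem diffPairMixture_nonneg {p q : ι → ℝ} (hp : ∀ x, 0 ≤ p x) (hq : ∀ x, 0 ≤ q x)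
    (z : ι × ι) : 0 ≤ diffPairMixture p q z :=
  div_nonneg (add_nonneg (mul_nonneg (hp z.1) (hq z.2)) (mul_nonneg (hq z.1) (hp z.2)))
    zero_le_two

theorem pairMixture_pos {p q : ι → ℝ} (hp : ∀ x, 0 ≤ p x) (hq : ∀ x, 0 < q x) (z : ι × ι) :
    0 < pairMixture p q z :=
  half_pos (add_pos_of_pos_of_nonneg (samePairMixture_pos hp hq z)
    (diffPairMixture_nonneg hp (fun x => (hq x).le) z))

theorem generatorWeight_eq_four_mul_sub (p q : ι → ℝ) (z : ι × ι) :
    generatorWeight p q z = 4 * (samePairMixture p q z - pairMixture p q z) := by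
  unfold generatorWeight pairMixture samePairMixture diffPairMixture
  ring

theorem generatorWeight_eq_mul (p q : ι → ℝ) (z : ι × ι) :
    generatorWeight p q z = (p z.1 - q z.1) * (p z.2 - q z.2) := by
  unfold generatorWeight
  ring

variable [Fintype ι]

theorem sum_generatorWeight (p q : ι → ℝ) :
    ∑ z, generatorWeight p q z = (∑ x, p x - ∑ x, q x) ^ 2 := by
  simp only [generatorWeight_eq_mul, Fintype.sum_prod_type, ← Finset.sum_mul_sum,
    Finset.sum_sub_distrib, sq]

theorem stmt3_general {p q : ι → ℝ} (hp : ∀ x, 0 ≤ p x) (hq : ∀ x, 0 < q x)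
    (hpq : ∑ x, p x = ∑ x, q x) :
    ∑ z, generatorWeight p q z * Real.log (optimalDiscriminator p q z)
      = 4 * (finiteKL (samePairMixture p q) (pairMixture p q)
          + finiteKL (pairMixture p q) (samePairMixture p q)) := by
  have sum_weight : ∑ z, generatorWeight p q z = 0 := by
    rw [sum_generatorWeight, hpq, sub_self, zero_pow two_ne_zero]
  have ratio_ne_zero (z : ι × ι) : samePairMixture p q z / pairMixture p q z ≠ 0 :=
    (div_pos (samePairMixture_pos hp hq z) (pairMixture_pos hp hq z)).ne'
  calc
    ∑ z, generatorWeight p q z * Real.log (optimalDiscriminator p q z)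
        = ∑ z, generatorWeight p q z *
            Real.log (samePairMixture p q z / pairMixture p q z / 2) := by
      simp only [optimalDiscriminator, div_div, mul_comm]
    _ = ∑ z, generatorWeight p q z * Real.log (samePairMixture p q z / pairMixture p q z) :=
      sum_mul_log_div_const sum_weight ratio_ne_zero two_ne_zero
    _ = 4 * ∑ z, (samePairMixture p q z - pairMixture p q z) *
            Real.log (samePairMixture p q z / pairMixture p q z) := by
      simp only [generatorWeight_eq_four_mul_sub, mul_assoc, Finset.mul_sum]
    _ = 4 * (finiteKL (samePairMixture p q) (pairMixture p q)
          + finiteKL (pairMixture p q) (samePairMixture p q)) := by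
      rw [finiteKL_add_finiteKL_swap]

end PairMixtures

theorem stmt3 {k : ℕ} (p q : Fin k → ℝ)
    (hp : ∀ x, 0 < p x) (hpsum : ∑ x, p x = 1)
    (hq : ∀ x, 0 < q x) (hqsum : ∑ x, q x = 1) :
    let Mp : Fin k → Fin k → ℝ := fun x y => (p x * p y + q x * q y) / 2
    let Mm : Fin k → Fin k → ℝ := fun x y => (p x * q y + q x * p y) / 2
    let M : Fin k → Fin k → ℝ := fun x y => (Mp x y + Mm x y) / 2
    let F : Fin k → Fin k → ℝ := fun x y =>
      p x * p y + q x * q y - p x * q y - q x * p y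
    let Dstar : Fin k → Fin k → ℝ := fun x y => Mp x y / (2 * M x y)
    ∑ x, ∑ y, F x y * Real.log (Dstar x y)
      = 4 * ((∑ x, ∑ y, Mp x y * Real.log (Mp x y / M x y))
          + (∑ x, ∑ y, M x y * Real.log (M x y / Mp x y))) := by
  simpa only [finiteKL, Fintype.sum_prod_type, generatorWeight, optimalDiscriminator,
    samePairMixture, diffPairMixture, pairMixture] using
    stmt3_general (fun x => (hp x).le) hq (hpsum.trans hqsum.symm)
end

section
/- Let q : ℝⁿ → ℝᵏ be continuously differentiable with q(x; θ) > 0 for every coordinate x and every θ, and Σₓ q(x; θ) = 1 for every θ. Let p ∈ ℝᵏ be a strictly positive probability vector and define L_KL(θ) = Σₓ p(x)·log(p(x)/q(x; θ)). Then ∇L_KL(θ) = −Σₓ p(x)·∇_θ log q(x; θ), and consequently ‖Σₓ p(x)·∇_θ log q(x; θ) − Σₓ q(x; θ)·∇_θ log q(x; θ)‖² = ‖∇L_KL(θ)‖² for all θ. -/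
open scoped BigOperators

open Filter
open scoped NNReal Topology

/-!
The score `∇ log q` has mean zero under `q` itself: weighting it by `q` turns the sum into
`∑ ∇ q`, the gradient of the constant total mass. So the second term of the PairGAN discrepancy
vanishes, and the first is minus the gradient of the Kullback-Leibler divergence, because
`p * log (p / y)` has derivative `-p / y` in `y`.
-/

section Gradient

variable {𝕜 F : Type*} [RCLike 𝕜]
  [NormedAddCommGroup F] [InnerProductSpace 𝕜 F] [CompleteSpace F]

theorem hasGradientAt_sum {ι : Type*} {s : Finset ι} {f : ι → F → 𝕜} {f' : ι → F} {x : F}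
    (h : ∀ i ∈ s, HasGradientAt (f i) (f' i) x) :
    HasGradientAt (fun y => ∑ i ∈ s, f i y) (∑ i ∈ s, f' i) x := by
  rw [hasGradientAt_iff_hasFDerivAt, map_sum]
  exact HasFDerivAt.fun_sum fun i hi => (h i hi).hasFDerivAt

theorem hasGradientAt_comp_of_hasDerivAt {g : 𝕜 → 𝕜} {g' : 𝕜} {f : F → 𝕜} {f' x : F}
    (hg : HasDerivAt g g' (f x)) (hf : HasGradientAt f f' x) :
    HasGradientAt (fun y => g (f y)) (starRingEnd 𝕜 g' • f') x := by
  rw [hasGradientAt_iff_hasFDerivAt, map_smulₛₗ, RCLike.conj_conj]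
  exact hg.comp_hasFDerivAt x hf.hasFDerivAt

end Gradient

theorem hasDerivAt_mul_log_div (a : ℝ) {y : ℝ} (hy : y ≠ 0) :
    HasDerivAt (fun z => a * Real.log (a / z)) (-(a * y⁻¹)) y := by
  obtain rfl | ha := eq_or_ne a 0
  · simpa using hasDerivAt_const y (0 : ℝ)
  · have hdiv : HasDerivAt (fun z => a / z) (a * -(y ^ 2)⁻¹) y := by
      simpa only [div_eq_mul_inv] using (hasDerivAt_inv hy).const_mul a
    refine ((hdiv.log (div_ne_zero ha hy)).const_mul a).congr_deriv ?_
    field_simp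

section ParametricFamily

variable {ι E : Type*} [NormedAddCommGroup E] [InnerProductSpace ℝ E] [CompleteSpace E]

/-- The score `∇_θ log q(x; θ)` of a parametric family `q`, written as `∇_θ q(x; θ) / q(x; θ)`. -/
noncomputable def score (q : E → ι → ℝ) (θ : E) (x : ι) : E :=
  (q θ x)⁻¹ • gradient (fun θ' => q θ' x) θ

variable [Fintype ι]

/-- The Kullback-Leibler divergence `KL(p‖q)` of weight vectors on a finite sample space. The
weights `p` may vanish, which agrees with the convention `0 * log 0 = 0`; the value is meaningful
for positive `q` only. -/
noncomputable def relEntropy (p : ι → ℝ≥0) (q : ι → ℝ) : ℝ :=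
  ∑ x, (p x : ℝ) * Real.log (p x / q x)

variable {q : E → ι → ℝ} {θ : E}

theorem sum_smul_score_eq_zero {c : ℝ} (hdiff : ∀ x, DifferentiableAt ℝ (fun θ' => q θ' x) θ)
    (hq : ∀ x, q θ x ≠ 0) (hsum : ∀ᶠ θ' in 𝓝 θ, ∑ x, q θ' x = c) :
    ∑ x, q θ x • score q θ x = 0 :=
  calc ∑ x, q θ x • score q θ x
    _ = ∑ x, gradient (fun θ' => q θ' x) θ :=
      Finset.sum_congr rfl fun x _ => smul_inv_smul₀ (hq x) _
    _ = gradient (fun θ' => ∑ x, q θ' x) θ :=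
      (hasGradientAt_sum fun x _ => (hdiff x).hasGradientAt).gradient.symm
    _ = gradient (fun _ => c) θ := EventuallyEq.gradient_eq hsum
    _ = 0 := gradient_fun_const θ c

theorem hasGradientAt_relEntropy (p : ι → ℝ≥0)
    (hdiff : ∀ x, DifferentiableAt ℝ (fun θ' => q θ' x) θ) (hq : ∀ x, q θ x ≠ 0) :
    HasGradientAt (fun θ' => relEntropy p (q θ')) (-∑ x, (p x : ℝ) • score q θ x) θ := by
  have hterm (x : ι) : HasGradientAt (fun θ' => (p x : ℝ) * Real.log (p x / q θ' x))
      (-((p x : ℝ) • score q θ x)) θ := by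
    simpa only [score, conj_trivial, neg_smul, mul_smul] using
      hasGradientAt_comp_of_hasDerivAt (f := fun θ' => q θ' x)
        (hasDerivAt_mul_log_div (p x) (hq x)) (hdiff x).hasGradientAt
  rw [← Finset.sum_neg_distrib]
  exact hasGradientAt_sum fun x _ => hterm x

theorem stmt15_general (p : ι → ℝ≥0) (hdiff : ∀ x, DifferentiableAt ℝ (fun θ' => q θ' x) θ)
    (hqpos : ∀ x, 0 < q θ x) (hqsum : ∀ᶠ θ' in 𝓝 θ, ∑ x, q θ' x = 1) :
    HasGradientAt (fun θ' => relEntropy p (q θ')) (-∑ x, (p x : ℝ) • score q θ x) θ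
      ∧ ‖(∑ x, (p x : ℝ) • score q θ x) - ∑ x, q θ x • score q θ x‖ ^ 2
          = ‖gradient (fun θ' => relEntropy p (q θ')) θ‖ ^ 2 := by
  have hq (x : ι) : q θ x ≠ 0 := (hqpos x).ne'
  have hgrad := hasGradientAt_relEntropy p hdiff hq
  refine ⟨hgrad, ?_⟩
  rw [sum_smul_score_eq_zero hdiff hq hqsum, sub_zero, hgrad.gradient, norm_neg]

end ParametricFamily

theorem stmt15 {n k : ℕ}
    (q : EuclideanSpace ℝ (Fin n) → Fin k → ℝ)
    (hdiff : ∀ x : Fin k, ContDiff ℝ 1 fun θ => q θ x)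
    (hqpos : ∀ (x : Fin k) (θ : EuclideanSpace ℝ (Fin n)), 0 < q θ x)
    (hqsum : ∀ θ : EuclideanSpace ℝ (Fin n), ∑ x, q θ x = 1)
    (p : Fin k → ℝ) (hppos : ∀ x, 0 < p x) (hpsum : ∑ x, p x = 1) :
    ∀ θ : EuclideanSpace ℝ (Fin n),
      gradient (fun θ' => ∑ x, p x * Real.log (p x / q θ' x)) θ
          = -∑ x, p x • ((q θ x)⁻¹ • gradient (fun θ' => q θ' x) θ)
      ∧ ‖(∑ x, p x • ((q θ x)⁻¹ • gradient (fun θ' => q θ' x) θ))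
            - ∑ x, q θ x • ((q θ x)⁻¹ • gradient (fun θ' => q θ' x) θ)‖ ^ 2
          = ‖gradient (fun θ' => ∑ x, p x * Real.log (p x / q θ' x)) θ‖ ^ 2 := by
  intro θ
  exact (stmt15_general (fun x => ⟨p x, (hppos x).le⟩)
    (fun x => (hdiff x).differentiable one_ne_zero θ) (hqpos · θ)
    (.of_forall hqsum)).imp_left HasGradientAt.gradient
end

section
/- Fix ψ ∈ ℝ. (a) For every real γ > 1, the function h(x) = −log(1 + exp(ψ·|x|^γ)) is differentiable at x = 0 with h'(0) = 0. (b) The function g(x) = −log(1 + exp(ψ·x)) is differentiable at x = 0 with g'(0) = −ψ/2; in particular g'(0) ≠ 0 whenever ψ ≠ 0. -/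
/-!
By the chain rule, the gradient of a generator objective `-log (1 + exp (f x))` is
`-sigmoid (f x) * f' x`. The sigmoid never vanishes, so a stationary point of the objective is
exactly a stationary point of the discriminator `f`: the pairwise one `ψ * |x| ^ γ` is flat at the
aligned point `0`, whereas the unary one `ψ * x` has slope `ψ` there, weighted by `sigmoid 0 = 1/2`.
-/

theorem hasDerivAt_log_one_add_exp (x : ℝ) :
    HasDerivAt (fun y : ℝ => Real.log (1 + Real.exp y)) (Real.sigmoid x) x := by
  have hlog : HasDerivAt (fun y : ℝ => Real.log (1 + Real.exp y))
      (Real.exp x / (1 + Real.exp x)) x :=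
    ((Real.hasDerivAt_exp x).const_add 1).log (by positivity)
  have hsigmoid : Real.exp x / (1 + Real.exp x) = Real.sigmoid x := by
    rw [Real.sigmoid_def, Real.exp_neg]
    field_simp
    ring
  rwa [hsigmoid] at hlog

theorem hasDerivAt_neg_log_one_add_exp_comp {f : ℝ → ℝ} {f' x : ℝ} (hf : HasDerivAt f f' x) :
    HasDerivAt (fun y : ℝ => -Real.log (1 + Real.exp (f y))) (-(Real.sigmoid (f x) * f')) x :=
  ((hasDerivAt_log_one_add_exp (f x)).comp x hf).fun_neg

theorem hasDerivAt_abs_rpow_zero {γ : ℝ} (hγ : 1 < γ) :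
    HasDerivAt (fun x : ℝ => |x| ^ γ) 0 0 := by
  simpa only [mul_zero] using hasDerivAt_abs_rpow 0 hγ

theorem stmt19 (ψ : ℝ) :
    (∀ γ : ℝ, 1 < γ →
      HasDerivAt (fun x : ℝ => -Real.log (1 + Real.exp (ψ * |x| ^ γ))) 0 0)
    ∧ HasDerivAt (fun x : ℝ => -Real.log (1 + Real.exp (ψ * x))) (-ψ / 2) 0
    ∧ (ψ ≠ 0 → -ψ / 2 ≠ 0) := by
  refine ⟨fun γ hγ => ?pairwise, ?unary, fun hψ => div_ne_zero (neg_ne_zero.mpr hψ) two_ne_zero⟩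
  case pairwise =>
    have hD : HasDerivAt (fun x : ℝ => ψ * |x| ^ γ) (ψ * 0) 0 :=
      (hasDerivAt_abs_rpow_zero hγ).const_mul ψ
    simpa only [mul_zero, neg_zero] using hasDerivAt_neg_log_one_add_exp_comp hD
  case unary =>
    have hD : HasDerivAt (fun x : ℝ => ψ * x) ψ 0 := hasDerivAt_const_mul ψ
    have hslope : -(Real.sigmoid (ψ * 0) * ψ) = -ψ / 2 := by
      rw [mul_zero, Real.sigmoid_zero]
      ring
    exact hslope ▸ hasDerivAt_neg_log_one_add_exp_comp hD
end
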